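/- Let d ≥ 3 and let w be a bispecial factor of u_d having at least two distinct letters smaller than d−1 among its left extensions, and set i = min{a ∈ A : aw ∈ L(u_d)}. Then w = F_i, i ≤ d−3, the set of both-sided extensions of w is exactly {(d−1)w(d−1)} ∪ {iwk : i < k ≤ d−1} ∪ {kwi : i < k ≤ d−1}, and consequently the bilateral order of w equals 0. -/

import Mathlib

namespace RichRT

variable {A : Type*}

/-- The word `w` occurs in the sequence `u` at position `j`. -/
def OccursAt (w : List A) (u : ℕ → A) (j : ℕ) : Prop :=
  w = (List.range w.length).map fun t => u (j + t)

/-- `w` is a factor of the infinite sequence `u`. -/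
def IsFactorS (w : List A) (u : ℕ → A) : Prop :=
  ∃ j : ℕ, OccursAt w u j

/-- `u` is recurrent: every factor occurs infinitely often. -/
def Recurrent (u : ℕ → A) : Prop :=
  ∀ w : List A, IsFactorS w u → ∀ N : ℕ, ∃ j, N ≤ j ∧ OccursAt w u j

/-- The number of distinct palindromic factors of a finite word. -/
noncomputable def palCount (w : List A) : ℕ :=
  Set.ncard {p : List A | p <:+: w ∧ p.reverse = p}

/-- A finite word of length `n` is rich if it has exactly `n+1` palindromic factors. -/
def RichWord (w : List A) : Prop := palCount w = w.length + 1

/-- A sequence is rich if all its factors are rich. -/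
def RichSeq (u : ℕ → A) : Prop := ∀ w : List A, IsFactorS w u → RichWord w

/-- The prefix of length `k` of the periodic sequence `vvv⋯`. -/
def powPref (v : List A) (k : ℕ) : List A := ((List.replicate k v).flatten).take k

/-- The set of exponents `k/|v|` of fractional powers `v^(k/|v|)` occurring in `u`,
with `|v| ≥ n`. -/
def expSet (u : ℕ → A) (n : ℕ) : Set ℝ :=
  {x | ∃ (v : List A) (k : ℕ), v ≠ [] ∧ n ≤ v.length ∧
    IsFactorS (powPref v k) u ∧ x = (k : ℝ) / (v.length : ℝ)}

/-- The critical exponent of a sequence, with values in `EReal`. -/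
noncomputable def critExp (u : ℕ → A) : EReal :=
  sSup ((fun x : ℝ => (x : EReal)) '' expSet u 0)

/-- The asymptotic critical exponent of a sequence: `⊤` if the critical exponent is `⊤`,
otherwise the limit (= infimum, by monotonicity) over `n` of the suprema of exponents of
powers `v^e` with `|v| ≥ n`. -/
noncomputable def acritExp (u : ℕ → A) : EReal :=
  if critExp u = ⊤ then ⊤
  else ⨅ n : ℕ, sSup ((fun x : ℝ => (x : EReal)) '' expSet u n)

/-- The morphism `φ_d` on letters: `i ↦ 0(i+1)` for `i < d-1`, `d-1 ↦ 0(d-1)(d-1)`. -/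
def phiL (d : ℕ) (i : ℕ) : List ℕ :=
  if i < d - 1 then [0, i + 1] else [0, d - 1, d - 1]

/-- The morphism `φ_d` on words. -/
def phiW (d : ℕ) (w : List ℕ) : List ℕ := w.flatMap (phiL d)

/-- `u` is the fixed point of `φ_d`: it begins with `0` and `φ_d(u) = u`, i.e. the image
of every prefix of `u` is again a prefix of `u`. -/
def IsPhiFixed (d : ℕ) (u : ℕ → ℕ) : Prop :=
  u 0 = 0 ∧ ∀ m : ℕ, OccursAt (phiW d ((List.range m).map u)) u 0

/-- Left extensions of `w` in `u`. -/
def Lext (u : ℕ → ℕ) (w : List ℕ) : Set (List ℕ) :=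
  {x | ∃ i : ℕ, x = i :: w ∧ IsFactorS x u}

/-- Right extensions of `w` in `u`. -/
def Rext (u : ℕ → ℕ) (w : List ℕ) : Set (List ℕ) :=
  {x | ∃ i : ℕ, x = w ++ [i] ∧ IsFactorS x u}

/-- Both-sided extensions of `w` in `u`. -/
def Bext (u : ℕ → ℕ) (w : List ℕ) : Set (List ℕ) :=
  {x | ∃ i j : ℕ, x = i :: (w ++ [j]) ∧ IsFactorS x u}

/-- `w` is a bispecial factor of `u`. -/
def Bispecial (u : ℕ → ℕ) (w : List ℕ) : Prop :=
  IsFactorS w u ∧ 2 ≤ (Lext u w).ncard ∧ 2 ≤ (Rext u w).ncard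

/-- The bilateral order `b(w) = #Bext(w) − #Lext(w) − #Rext(w) + 1`. -/
noncomputable def bord (u : ℕ → ℕ) (w : List ℕ) : ℤ :=
  ((Bext u w).ncard : ℤ) - ((Lext u w).ncard : ℤ) - ((Rext u w).ncard : ℤ) + 1

/-- The palindromes `F_0 = ε`, `F_i = φ(F_{i-1})0`. -/
def Fword (d : ℕ) : ℕ → List ℕ
  | 0 => []
  | i + 1 => phiW d (Fword d i) ++ [0]

/-- Membership in the set `𝒯` of bispecial triplets. -/
def TripleMem (d : ℕ) (u : ℕ → ℕ) (t : ℕ × List ℕ × ℕ) : Prop :=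
  Bispecial u t.2.1 ∧ t.1 < d - 1 ∧ t.2.2 < d - 1 ∧
    IsFactorS (t.1 :: t.2.1) u ∧ IsFactorS (t.2.1 ++ [t.2.2]) u

/-- The map `f` on triplets. -/
def fmap (d : ℕ) (t : ℕ × List ℕ × ℕ) : ℕ × List ℕ × ℕ :=
  ((t.1 + 1) % (d - 1),
   (if t.1 = d - 2 then [d - 1] else []) ++ phiW d t.2.1 ++ [0] ++
     (if t.2.2 = d - 2 then [d - 1] else []),
   (t.2.2 + 1) % (d - 1))

/-- The initial triplets `T_k = (0, ε, k)` for `k ≤ d-2` and `T_{d-1} = (0, d-1, 0)`. -/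
def Tinit (d k : ℕ) : ℕ × List ℕ × ℕ :=
  if k = d - 1 then (0, [d - 1], 0) else (0, ([] : List ℕ), k)

/-- The Parikh vector of a word. -/
def parikh (d : ℕ) (w : List ℕ) : Fin d → ℕ := fun i => w.count (i : ℕ)

/-- The incidence matrix of `φ_d`. -/
def Mmat (d : ℕ) : Matrix (Fin d) (Fin d) ℕ := fun i j => (phiL d (j : ℕ)).count (i : ℕ)

/-- `r` is a return word to `w` in `u`. -/
def ReturnWord (u : ℕ → ℕ) (w r : List ℕ) : Prop :=
  ∃ j ℓ : ℕ, j < ℓ ∧ OccursAt w u j ∧ OccursAt w u ℓ ∧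
    (∀ m, j < m → m < ℓ → ¬ OccursAt w u m) ∧
    r = (List.range (ℓ - j)).map fun t => u (j + t)

/-- `R` is a complete return word to `w` in `u`. -/
def CompleteReturn (u : ℕ → ℕ) (w R : List ℕ) : Prop :=
  ∃ r : List ℕ, ReturnWord u w r ∧ R = r ++ w

/-- Position of the block `φ(u_m)` in `u`. -/
def bpos (d : ℕ) (u : ℕ → ℕ) (m : ℕ) : ℕ := (phiW d ((List.range m).map u)).length

theorem occ_nil (u : ℕ → ℕ) (j : ℕ) : OccursAt [] u j := by simp [OccursAt]

theorem occ_cons (a : ℕ) (w : List ℕ) (u : ℕ → ℕ) (j : ℕ) :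
    OccursAt (a :: w) u j ↔ u j = a ∧ OccursAt w u (j + 1) := by
  unfold OccursAt
  rw [List.length_cons, List.range_succ_eq_map]
  simp only [List.map_cons, List.map_map, List.cons.injEq, Nat.add_zero]
  have : ((fun t => u (j + t)) ∘ Nat.succ) = fun t => u (j + 1 + t) := by
    funext t
    simp only [Function.comp]
    congr 1
    omega
  rw [this]
  constructor
  · rintro ⟨h1, h2⟩
    exact ⟨h1.symm, h2⟩
  · rintro ⟨h1, h2⟩
    exact ⟨h1.symm, h2⟩

theorem occ_append (v w : List ℕ) (u : ℕ → ℕ) (j : ℕ) :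
    OccursAt (v ++ w) u j ↔ OccursAt v u j ∧ OccursAt w u (j + v.length) := by
  induction v generalizing j with
  | nil => simp [occ_nil]
  | cons a v ih =>
    rw [List.cons_append, occ_cons, occ_cons, ih, List.length_cons, and_assoc]
    have : j + 1 + v.length = j + (v.length + 1) := by omega
    rw [this]

theorem bpos_succ (d : ℕ) (u : ℕ → ℕ) (m : ℕ) :
    bpos d u (m + 1) = bpos d u m + (phiL d (u m)).length := by
  simp [bpos, phiW, List.range_succ]

theorem occ_block {d : ℕ} {u : ℕ → ℕ} (hu : IsPhiFixed d u) (m : ℕ) :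
    OccursAt (phiL d (u m)) u (bpos d u m) := by
  have h := hu.2 (m + 1)
  have e : phiW d ((List.range (m + 1)).map u)
      = phiW d ((List.range m).map u) ++ phiL d (u m) := by
    simp [phiW, List.range_succ]
  rw [e, occ_append] at h
  simpa [bpos] using h.2

theorem blk0 {d : ℕ} {u : ℕ → ℕ} (hu : IsPhiFixed d u) (m : ℕ) : u (bpos d u m) = 0 := by
  have h := occ_block hu m
  unfold phiL at h
  split_ifs at h <;> simp only [occ_cons] at h <;> exact h.1

theorem blk1 {d : ℕ} {u : ℕ → ℕ} (hu : IsPhiFixed d u) (m : ℕ) (hm : u m < d - 1) :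
    bpos d u (m + 1) = bpos d u m + 2 ∧ u (bpos d u m + 1) = u m + 1 := by
  have h := occ_block hu m
  have h2 := bpos_succ d u m
  unfold phiL at h h2
  rw [if_pos hm] at h h2
  simp only [occ_cons] at h
  exact ⟨h2, h.2.1⟩

theorem blk2 {d : ℕ} {u : ℕ → ℕ} (hu : IsPhiFixed d u) (m : ℕ) (hm : ¬ u m < d - 1) :
    bpos d u (m + 1) = bpos d u m + 3 ∧ u (bpos d u m + 1) = d - 1 ∧
      u (bpos d u m + 2) = d - 1 := by
  have h := occ_block hu m
  have h2 := bpos_succ d u m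
  unfold phiL at h h2
  rw [if_neg hm] at h h2
  simp only [occ_cons] at h
  exact ⟨h2, h.2.1, h.2.2.1⟩

theorem cover {d : ℕ} {u : ℕ → ℕ} (hu : IsPhiFixed d u) (n : ℕ) :
    ∃ m, n = bpos d u m ∨ n = bpos d u m + 1 ∨ (n = bpos d u m + 2 ∧ ¬ u m < d - 1) := by
  induction n with
  | zero => exact ⟨0, Or.inl (by simp [bpos, phiW])⟩
  | succ n ih =>
    obtain ⟨m, h | h | ⟨h, h'⟩⟩ := ih
    · exact ⟨m, by omega⟩
    · by_cases hm : u m < d - 1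
      · have := blk1 hu m hm
        exact ⟨m + 1, by omega⟩
      · exact ⟨m, by omega⟩
    · have := blk2 hu m h'
      exact ⟨m + 1, by omega⟩

theorem u_le {d : ℕ} {u : ℕ → ℕ} (hu : IsPhiFixed d u) (n : ℕ) : u n ≤ d - 1 := by
  obtain ⟨m, h | h | ⟨h, h'⟩⟩ := cover hu n
  · rw [h, blk0 hu]; omega
  · by_cases hm : u m < d - 1
    · rw [h, (blk1 hu m hm).2]; omega
    · rw [h, (blk2 hu m hm).2.1]
  · rw [h, (blk2 hu m h').2.2]

theorem zero_pos {d : ℕ} (hd : 3 ≤ d) {u : ℕ → ℕ} (hu : IsPhiFixed d u) (n : ℕ) (h0 : u n = 0) :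
    ∃ m, n = bpos d u m := by
  obtain ⟨m, h | h | ⟨h, h'⟩⟩ := cover hu n
  · exact ⟨m, h⟩
  · by_cases hm : u m < d - 1
    · have := (blk1 hu m hm).2
      rw [← h] at this; omega
    · have := (blk2 hu m hm).2.1
      rw [← h] at this; omega
  · have := (blk2 hu m h').2.2
    rw [← h] at this; omega

theorem two_letter {d : ℕ} (hd : 3 ≤ d) {u : ℕ → ℕ} (hu : IsPhiFixed d u) (n : ℕ) :
    (u n = d - 1 ∧ u (n + 1) = d - 1) ∨ (u n = 0 ∧ 0 < u (n + 1)) ∨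
      (u (n + 1) = 0 ∧ 0 < u n) := by
  obtain ⟨m, h | h | ⟨h, h'⟩⟩ := cover hu n
  · subst h
    have := blk0 hu m
    by_cases hm : u m < d - 1
    · have := blk1 hu m hm
      omega
    · have := blk2 hu m hm
      omega
  · subst h
    have h1 := blk0 hu (m + 1)
    by_cases hm : u m < d - 1
    · have h2 := blk1 hu m hm
      rw [h2.1] at h1
      right; right
      exact ⟨h1, by omega⟩
    · have := blk2 hu m hm
      left
      exact ⟨this.2.1, this.2.2⟩
  · subst h
    have h1 := blk0 hu (m + 1)
    have h2 := blk2 hu m h'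
    rw [h2.1] at h1
    right; right
    exact ⟨h1, by omega⟩

/-- Last letter of the block. -/
theorem blk_last {d : ℕ} {u : ℕ → ℕ} (hu : IsPhiFixed d u) (m : ℕ) :
    ∃ n, n + 1 = bpos d u (m + 1) ∧ u n = min (u m + 1) (d - 1) := by
  by_cases hm : u m < d - 1
  · have h := blk1 hu m hm
    exact ⟨bpos d u m + 1, by omega, by omega⟩
  · have h := blk2 hu m hm
    exact ⟨bpos d u m + 2, by omega, by omega⟩

theorem blk_snd {d : ℕ} {u : ℕ → ℕ} (hu : IsPhiFixed d u) (m : ℕ) :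
    u (bpos d u m + 1) = min (u m + 1) (d - 1) := by
  by_cases hm : u m < d - 1
  · have h := blk1 hu m hm
    omega
  · have h := blk2 hu m hm
    omega

theorem blk_third {d : ℕ} {u : ℕ → ℕ} (hu : IsPhiFixed d u) (m : ℕ) :
    u (bpos d u m + 2) = if u m < d - 1 then 0 else d - 1 := by
  by_cases hm : u m < d - 1
  · have h := blk1 hu m hm
    rw [if_pos hm, ← h.1, blk0 hu]
  · have h := blk2 hu m hm
    rw [if_neg hm, h.2.2]

theorem phiW_cons (d a : ℕ) (v : List ℕ) : phiW d (a :: v) = phiL d a ++ phiW d v := by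
  simp [phiW]

theorem sync {d : ℕ} (hd : 3 ≤ d) {u : ℕ → ℕ} (hu : IsPhiFixed d u) (v : List ℕ)
    (hv : ∀ x ∈ v, x ≤ d - 1) (n : ℕ) (rest : List ℕ) :
    OccursAt (phiW d v ++ 0 :: rest) u n ↔
      ∃ m, n = bpos d u m ∧ OccursAt v u m ∧
        OccursAt rest u (bpos d u (m + v.length) + 1) := by
  induction v generalizing n with
  | nil =>
    simp only [phiW, List.flatMap_nil, List.nil_append, occ_cons, occ_nil, List.length_nil,
      Nat.add_zero, true_and]
    constructor
    · rintro ⟨h0, h1⟩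
      obtain ⟨m, hm⟩ := zero_pos hd hu n h0
      exact ⟨m, hm, hm ▸ h1⟩
    · rintro ⟨m, hm, h1⟩
      subst hm
      exact ⟨blk0 hu m, h1⟩
  | cons a v ih =>
    have ha : a ≤ d - 1 := hv a (by simp)
    have hv' : ∀ x ∈ v, x ≤ d - 1 := fun x hx => hv x (by simp [hx])
    rw [phiW_cons, List.append_assoc, occ_append, ih hv']
    constructor
    · rintro ⟨h1, m', hm', h2, h3⟩
      have h0 : u n = 0 := by
        unfold phiL at h1
        split_ifs at h1 <;> simp only [occ_cons] at h1 <;> exact h1.1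
      obtain ⟨m, hm⟩ := zero_pos hd hu n h0
      have z := blk0 hu m'
      rw [← hm'] at z
      have key : u m = a ∧ bpos d u (m + 1) = bpos d u m' := by
        rw [← hm']
        have hle := u_le hu m
        have b1 := blk_snd hu m
        have b2 := blk_third hu m
        have b3 := bpos_succ d u m
        rw [← hm] at b1 b2 b3
        unfold phiL at h1 z b3 ⊢
        split_ifs at h1 z b3 b2 ⊢ <;> simp only [occ_cons, List.length_cons, List.length_nil, Nat.zero_add, Nat.reduceAdd] at h1 z b3 ⊢
        all_goals first
          | omega
          | (have := h1.2.2.1; simp only [Nat.add_assoc, Nat.reduceAdd] at this; omega)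
      have inj : m + 1 = m' := by
        have mono : StrictMono (bpos d u) := strictMono_nat_of_lt_succ fun k => by
          rw [bpos_succ]
          unfold phiL
          split_ifs <;> simp
        exact mono.injective key.2
      subst inj
      refine ⟨m, hm, ?_, ?_⟩
      · rw [occ_cons]; exact ⟨key.1, h2⟩
      · have : m + (a :: v).length = m + 1 + v.length := by simp; omega
        rw [this]; exact h3
    · rintro ⟨m, hm, h2, h3⟩
      rw [occ_cons] at h2
      have hb := occ_block hu m
      rw [h2.1] at hb
      subst hm
      refine ⟨hb, m + 1, ?_, h2.2, ?_⟩
      · rw [bpos_succ, h2.1]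
      · have : m + (a :: v).length = m + 1 + v.length := by simp; omega
        rw [← this]; exact h3

theorem occ_le {d : ℕ} {u : ℕ → ℕ} (hu : IsPhiFixed d u) {v : List ℕ} {m : ℕ}
    (h : OccursAt v u m) : ∀ x ∈ v, x ≤ d - 1 := by
  induction v generalizing m with
  | nil => simp
  | cons a v ih =>
    rw [occ_cons] at h
    intro x hx
    rcases List.mem_cons.1 hx with rfl | hx
    · rw [← h.1]; exact u_le hu m
    · exact ih h.2 x hx

theorem parse {d : ℕ} (hd : 3 ≤ d) {u : ℕ → ℕ} (hu : IsPhiFixed d u) (l : ℕ) :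
    ∀ (w : List ℕ) (m : ℕ), w.length = l → w ≠ [] → OccursAt w u (bpos d u m) →
    ∃ v, OccursAt v u m ∧ (w = phiW d v ++ [0] ∨
      (∃ c, 1 ≤ c ∧ c ≤ d - 1 ∧ w = phiW d v ++ [0, c]) ∨ w = phiW d v ++ [0, d - 1, d - 1]) := by
  induction l using Nat.strong_induction_on with
  | _ l ih =>
    intro w m hl hne hocc
    have step : ∀ w'', w = phiL d (u m) ++ w'' → w'' ≠ [] →
        ∃ v, OccursAt v u m ∧ (w = phiW d v ++ [0] ∨
          (∃ c, 1 ≤ c ∧ c ≤ d - 1 ∧ w = phiW d v ++ [0, c]) ∨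
            w = phiW d v ++ [0, d - 1, d - 1]) := by
      intro w'' hw'' hne''
      have hlen : w''.length < l := by
        rw [← hl, hw'', List.length_append]
        have : 0 < (phiL d (u m)).length := by unfold phiL; split_ifs <;> simp
        omega
      rw [hw'', occ_append, ← bpos_succ] at hocc
      obtain ⟨v, hv, hc⟩ := ih _ hlen w'' (m + 1) rfl hne'' hocc.2
      refine ⟨u m :: v, (occ_cons _ _ _ _).2 ⟨rfl, hv⟩, ?_⟩
      rw [hw'', phiW_cons]
      simp only [List.append_assoc, List.append_cancel_left_eq]
      exact hc
    have hb := blk0 hu m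
    have hle := u_le hu m
    match w, hne with
    | [a], _ =>
      simp only [occ_cons] at hocc
      exact ⟨[], occ_nil _ _, Or.inl (by simp [phiW]; omega)⟩
    | [a, b], _ =>
      simp only [occ_cons] at hocc
      have := blk_snd hu m
      refine ⟨[], occ_nil _ _, Or.inr (Or.inl ⟨b, by omega, by omega, ?_⟩)⟩
      simp [phiW]; omega
    | a :: b :: c :: w', _ =>
      simp only [occ_cons] at hocc
      by_cases hm : u m < d - 1
      · have := blk1 hu m hm
        apply step (c :: w') _ (by simp)
        unfold phiL
        rw [if_pos hm]
        simp; omega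
      · have := blk2 hu m hm
        obtain ⟨o1, o2, o3, o4⟩ := hocc
        simp only [Nat.add_assoc, Nat.reduceAdd] at o3
        rcases w' with _ | ⟨e, w'⟩
        · refine ⟨[], occ_nil _ _, Or.inr (Or.inr ?_)⟩
          simp [phiW]; omega
        · apply step (e :: w') _ (by simp)
          unfold phiL
          rw [if_neg hm]
          simp; omega

theorem occ_phi {d : ℕ} (hd : 3 ≤ d) {u : ℕ → ℕ} (hu : IsPhiFixed d u) {v : List ℕ} {m : ℕ}
    (h : OccursAt v u m) : OccursAt (phiW d v ++ [0]) u (bpos d u m) :=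
  (sync hd hu v (occ_le hu h) _ []).2 ⟨m, rfl, h, occ_nil _ _⟩

theorem bpos_mono (d : ℕ) (u : ℕ → ℕ) : StrictMono (bpos d u) :=
  strictMono_nat_of_lt_succ fun k => by
    rw [bpos_succ]
    unfold phiL
    split_ifs <;> simp

theorem occ_ext (u : ℕ → ℕ) (w : List ℕ) (j k : ℕ)
    (h : ∀ t < w.length, u (j + t) = u (k + t)) (hj : OccursAt w u j) : OccursAt w u k := by
  induction w generalizing j k with
  | nil => exact occ_nil _ _
  | cons a w ih =>
    rw [occ_cons] at hj ⊢
    have h0 := h 0 (by simp)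
    simp only [Nat.add_zero] at h0
    refine ⟨by rw [← h0]; exact hj.1, ih (j + 1) (k + 1) ?_ hj.2⟩
    intro t ht
    have := h (t + 1) (by simp; omega)
    rw [show j + 1 + t = j + (t + 1) by omega, show k + 1 + t = k + (t + 1) by omega]
    exact this

theorem occ_pref (u : ℕ → ℕ) (j m : ℕ) :
    OccursAt ((List.range m).map fun t => u (j + t)) u j := by simp [OccursAt]

theorem phi_len (d : ℕ) (v : List ℕ) : v.length ≤ (phiW d v).length := by
  induction v with
  | nil => simp
  | cons a v ih =>
    rw [phiW_cons, List.length_append, List.length_cons]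
    have : 0 < (phiL d a).length := by unfold phiL; split_ifs <;> simp
    omega

theorem occ_agree (u : ℕ → ℕ) (w : List ℕ) (j k : ℕ) (hj : OccursAt w u j)
    (hk : OccursAt w u k) : ∀ t < w.length, u (j + t) = u (k + t) := by
  induction w generalizing j k with
  | nil => simp
  | cons a w ih =>
    rw [occ_cons] at hj hk
    intro t ht
    rcases t with _ | t
    · simp only [Nat.add_zero]; rw [hj.1, hk.1]
    · have := ih (j + 1) (k + 1) hj.2 hk.2 t (by simpa using ht)
      rw [show j + (t + 1) = j + 1 + t by omega, show k + (t + 1) = k + 1 + t by omega]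
      exact this

theorem pref_rec {d : ℕ} (hd : 3 ≤ d) {u : ℕ → ℕ} (hu : IsPhiFixed d u) (m : ℕ) :
    ∃ j, 1 ≤ j ∧ ∀ t < m, u t = u (j + t) := by
  induction m with
  | zero => exact ⟨1, le_refl _, by simp⟩
  | succ m ih =>
    obtain ⟨j, hj, h⟩ := ih
    have h1 : OccursAt ((List.range m).map fun t => u (0 + t)) u 0 := occ_pref u 0 m
    have h2 := occ_ext u _ 0 j (by intro t ht; rw [Nat.zero_add]; exact h t (by simpa using ht)) h1
    have g1 := occ_phi hd hu h1
    have g2 := occ_phi hd hu h2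
    have z : bpos d u 0 = 0 := by simp [bpos, phiW]
    rw [z] at g1
    refine ⟨bpos d u j, ?_, ?_⟩
    · have := (bpos_mono d u).id_le j
      simp only [id] at this
      omega
    · intro t ht
      have := occ_agree u _ _ _ g1 g2 t (by
        have := phi_len d ((List.range m).map fun t => u (0 + t))
        rw [List.length_append]
        simp only [List.length_map, List.length_range] at this
        simp only [List.length_cons, List.length_nil]
        omega)
      rw [Nat.zero_add] at this
      exact this

/-- The word `awc` is a factor. -/
def EE (u : ℕ → ℕ) (w : List ℕ) (a c : ℕ) : Prop := IsFactorS (a :: (w ++ [c])) u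

theorem EE_iff (u : ℕ → ℕ) (w : List ℕ) (a c : ℕ) :
    EE u w a c ↔ ∃ n, u n = a ∧ OccursAt w u (n + 1) ∧ u (n + 1 + w.length) = c := by
  simp [EE, IsFactorS, occ_cons, occ_append, occ_nil]

theorem left_iff (u : ℕ → ℕ) (w : List ℕ) (a : ℕ) :
    IsFactorS (a :: w) u ↔ ∃ c, EE u w a c := by
  simp only [EE_iff, IsFactorS, occ_cons]
  constructor
  · rintro ⟨n, h1, h2⟩
    exact ⟨_, n, h1, h2, rfl⟩
  · rintro ⟨c, n, h1, h2, h3⟩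
    exact ⟨n, h1, h2⟩

theorem right_iff {d : ℕ} (hd : 3 ≤ d) {u : ℕ → ℕ} (hu : IsPhiFixed d u) (w : List ℕ) (c : ℕ) :
    IsFactorS (w ++ [c]) u ↔ ∃ a, EE u w a c := by
  constructor
  · rintro ⟨n, hn⟩
    have hpos : ∃ n, OccursAt (w ++ [c]) u (n + 1) := by
      rcases n with _ | n
      · obtain ⟨j, hj, h⟩ := pref_rec hd hu (w ++ [c]).length
        refine ⟨j - 1, ?_⟩
        rw [Nat.sub_add_cancel hj]
        refine occ_ext u _ 0 j ?_ hn
        intro t ht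
        rw [Nat.zero_add]
        exact h t ht
      · exact ⟨n, hn⟩
    obtain ⟨n, hn⟩ := hpos
    exact ⟨u n, n, (occ_cons _ _ _ _).2 ⟨rfl, hn⟩⟩
  · rintro ⟨a, n, hn⟩
    exact ⟨n + 1, ((occ_cons _ _ _ _).1 hn).2⟩

theorem EE_phi {d : ℕ} (hd : 3 ≤ d) {u : ℕ → ℕ} (hu : IsPhiFixed d u) (v : List ℕ)
    (hv : ∀ x ∈ v, x ≤ d - 1) (a c : ℕ) :
    EE u (phiW d v ++ [0]) a c ↔
      ∃ x y, EE u v x y ∧ a = min (x + 1) (d - 1) ∧ c = min (y + 1) (d - 1) := by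
  have e : a :: (phiW d v ++ [0] ++ [c]) = a :: (phiW d v ++ 0 :: [c]) := by simp
  unfold EE
  rw [e]
  change (∃ n, _) ↔ _
  simp only [occ_cons, sync hd hu v hv, occ_nil, and_true]
  constructor
  · rintro ⟨n, hn, m, hm, h1, h2⟩
    rcases m with _ | m
    · simp [bpos, phiW] at hm
    · obtain ⟨n', hn', hl⟩ := blk_last hu m
      have : n = n' := by omega
      subst this
      refine ⟨u m, u (m + 1 + v.length), (EE_iff u v _ _).2 ⟨m, rfl, h1, rfl⟩, ?_, ?_⟩
      · rw [← hn, hl]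
      · rw [← h2, blk_snd hu]
  · rintro ⟨x, y, hE, ha, hc⟩
    obtain ⟨m, h1, h2, h3⟩ := (EE_iff u v x y).1 hE
    obtain ⟨n, hn, hl⟩ := blk_last hu m
    refine ⟨n, ?_, m + 1, hn, h2, ?_⟩
    · rw [hl, h1, ha]
    · rw [blk_snd hu, h3, hc]

theorem EE_phi' {d : ℕ} (hd : 3 ≤ d) {u : ℕ → ℕ} (hu : IsPhiFixed d u) (v : List ℕ)
    (hv : ∀ x ∈ v, x ≤ d - 1) (a b c : ℕ) (h : EE u (phiW d v ++ [0, b]) a c) :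
      ∃ x y, EE u v x y ∧ a = min (x + 1) (d - 1) ∧ b = min (y + 1) (d - 1) ∧ y ≤ d - 1 ∧
        c = if y < d - 1 then 0 else d - 1 := by
  have e : a :: (phiW d v ++ [0, b] ++ [c]) = a :: (phiW d v ++ 0 :: [b, c]) := by simp
  unfold EE at h
  rw [e] at h
  obtain ⟨n, h⟩ := h
  simp only [occ_cons, sync hd hu v hv, occ_nil, and_true] at h
  obtain ⟨hn, m, hm, h1, h2, h3⟩ := h
  rcases m with _ | m
  · simp [bpos, phiW] at hm
  · obtain ⟨n', hn', hl⟩ := blk_last hu m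
    have : n = n' := by omega
    subst this
    refine ⟨u m, u (m + 1 + v.length), (EE_iff u v _ _).2 ⟨m, rfl, h1, rfl⟩, ?_, ?_, u_le hu _, ?_⟩
    · rw [← hn, hl]
    · rw [← h2, blk_snd hu]
    · rw [← h3, ← blk_third hu]

theorem EE_phi'' {d : ℕ} (hd : 3 ≤ d) {u : ℕ → ℕ} (hu : IsPhiFixed d u) (v : List ℕ)
    (hv : ∀ x ∈ v, x ≤ d - 1) (a c : ℕ) (h : EE u (phiW d v ++ [0, d - 1, d - 1]) a c) :
      c = 0 := by
  have e : a :: (phiW d v ++ [0, d - 1, d - 1] ++ [c])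
      = a :: (phiW d v ++ 0 :: [d - 1, d - 1, c]) := by simp
  unfold EE at h
  rw [e] at h
  obtain ⟨n, h⟩ := h
  simp only [occ_cons, sync hd hu v hv, occ_nil, and_true] at h
  obtain ⟨hn, m, hm, h1, h2, h3, h4⟩ := h
  have b3 := blk_third hu (m + v.length)
  split_ifs at b3 with hlt
  · simp only [Nat.add_assoc, Nat.reduceAdd] at h3 b3
    omega
  · have b := blk2 hu _ hlt
    have z := blk0 hu (m + v.length + 1)
    rw [b.1] at z
    simp only [Nat.add_assoc, Nat.reduceAdd] at h4 z
    omega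

theorem letter_occ {d : ℕ} {u : ℕ → ℕ} (hu : IsPhiFixed d u) (k : ℕ) (hk : k ≤ d - 1) :
    ∃ m, u m = k := by
  induction k with
  | zero => exact ⟨0, hu.1⟩
  | succ k ih =>
    obtain ⟨m, hm⟩ := ih (by omega)
    exact ⟨bpos d u m + 1, by rw [(blk1 hu m (by omega)).2, hm]⟩

/-- The claimed extension set. -/
def Ext (d i a c : ℕ) : Prop :=
  (a = d - 1 ∧ c = d - 1) ∨ (a = i ∧ i < c ∧ c ≤ d - 1) ∨ (c = i ∧ i < a ∧ a ≤ d - 1)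

theorem EE_nil {d : ℕ} (hd : 3 ≤ d) {u : ℕ → ℕ} (hu : IsPhiFixed d u) (a c : ℕ) :
    EE u [] a c ↔ Ext d 0 a c := by
  rw [EE_iff]
  simp only [occ_nil, true_and, List.length_nil, Nat.add_zero]
  constructor
  · rintro ⟨n, rfl, rfl⟩
    have h1 := two_letter hd hu n
    have h2 := u_le hu n
    have h3 := u_le hu (n + 1)
    unfold Ext
    omega
  · rintro (⟨rfl, rfl⟩ | ⟨rfl, h1, h2⟩ | ⟨rfl, h1, h2⟩)
    · obtain ⟨m, hm⟩ := letter_occ hu (d - 1) le_rfl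
      exact ⟨bpos d u m + 1, (blk2 hu m (by omega)).2.1, (blk2 hu m (by omega)).2.2⟩
    · obtain ⟨m, hm⟩ := letter_occ hu (c - 1) (by omega)
      refine ⟨bpos d u m, blk0 hu m, ?_⟩
      rw [blk_snd hu]; omega
    · obtain ⟨m, hm⟩ := letter_occ hu (a - 1) (by omega)
      obtain ⟨n, hn, hl⟩ := blk_last hu m
      refine ⟨n, by omega, ?_⟩
      rw [hn, blk0 hu]

set_option maxHeartbeats 4000000 in
theorem core {d : ℕ} (hd : 3 ≤ d) {u : ℕ → ℕ} (hu : IsPhiFixed d u) (l : ℕ) :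
    ∀ w : List ℕ, w.length = l →
    (∃ a b c c', a < d - 1 ∧ b < d - 1 ∧ a ≠ b ∧ EE u w a c ∧ EE u w b c') →
    (∃ a b c c', c ≠ c' ∧ EE u w a c ∧ EE u w b c') →
    ∃ i, i ≤ d - 3 ∧ w = Fword d i ∧ ∀ a c, EE u w a c ↔ Ext d i a c := by
  induction l using Nat.strong_induction_on with
  | _ l ih =>
    rintro w hl ⟨a, b, c, c', had, hbd, hab, ha, hb⟩ ⟨e, e', f, f', hff, hf, hf'⟩
    rcases w with _ | ⟨x, w'⟩
    · exact ⟨0, by omega, rfl, EE_nil hd hu⟩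
    have hx : x = 0 := by
      obtain ⟨n, h1, h2, -⟩ := (EE_iff _ _ _ _).1 ha
      obtain ⟨n', h1', h2', -⟩ := (EE_iff _ _ _ _).1 hb
      rw [occ_cons] at h2 h2'
      have t1 := two_letter hd hu n
      have t2 := two_letter hd hu n'
      omega
    obtain ⟨n, h1, h2, -⟩ := (EE_iff _ _ _ _).1 ha
    have h0 : u (n + 1) = 0 := by
      rw [occ_cons] at h2; omega
    obtain ⟨m, hm⟩ := zero_pos hd hu _ h0
    rw [hm] at h2
    generalize hwdef : x :: w' = w at *
    have hwne : w ≠ [] := by rw [← hwdef]; simp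
    obtain ⟨v, hv, hcase⟩ := parse hd hu l w m hl hwne h2
    have hvle := occ_le hu hv
    have hvl := phi_len d v
    rcases hcase with h | ⟨g, hg1, hg2, h⟩ | h
    · subst h
      rw [EE_phi hd hu v hvle] at ha hb hf hf'
      obtain ⟨xa, ya, Ea, ha1, ha2⟩ := ha
      obtain ⟨xb, yb, Eb, hb1, hb2⟩ := hb
      obtain ⟨xf, yf, Ef, hf1, hf2⟩ := hf
      obtain ⟨xf', yf', Ef', hf1', hf2'⟩ := hf'
      have hlen : v.length < l := by
        rw [← hl]; simp; omega
      obtain ⟨i, hi, hF, hE⟩ := ih _ hlen v rfl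
        ⟨xa, xb, ya, yb, by omega, by omega, by omega, Ea, Eb⟩
        ⟨xf, xf', yf, yf', by rintro rfl; omega, Ef, Ef'⟩
      have hi' : i + 1 ≤ d - 3 := by
        rw [hE] at Ea Eb
        unfold Ext at Ea Eb
        omega
      refine ⟨i + 1, hi', by rw [hF]; rfl, ?_⟩
      intro p q
      rw [EE_phi hd hu v hvle]
      simp only [hE]
      constructor
      · rintro ⟨x, y, h, rfl, rfl⟩
        unfold Ext at h ⊢
        omega
      · intro h
        unfold Ext at h
        rcases h with h | h | h
        · exact ⟨d - 1, d - 1, by unfold Ext; omega, by omega, by omega⟩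
        · exact ⟨i, q - 1, by unfold Ext; omega, by omega, by omega⟩
        · exact ⟨p - 1, i, by unfold Ext; omega, by omega, by omega⟩
    · subst h
      obtain ⟨xa, ya, Ea, ha1, ha2, ha3, ha4⟩ := EE_phi' hd hu v hvle _ _ _ ha
      obtain ⟨xb, yb, Eb, hb1, hb2, hb3, hb4⟩ := EE_phi' hd hu v hvle _ _ _ hb
      obtain ⟨xf, yf, Ef, hf1, hf2, hf3, hf4⟩ := EE_phi' hd hu v hvle _ _ _ hf
      obtain ⟨xf', yf', Ef', hf1', hf2', hf3', hf4'⟩ := EE_phi' hd hu v hvle _ _ _ hf'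
      have hlen : v.length < l := by
        rw [← hl]; simp; omega
      have hyy : yf ≠ yf' := by
        rintro rfl
        exact hff (hf4.trans hf4'.symm)
      obtain ⟨i, hi, hF, hE⟩ := ih _ hlen v rfl
        ⟨xa, xb, ya, yb, by omega, by omega, by omega, Ea, Eb⟩
        ⟨xf, xf', yf, yf', hyy, Ef, Ef'⟩
      rw [hE] at Ea Eb
      unfold Ext at Ea Eb
      omega
    · subst h
      have q1 := EE_phi'' hd hu v hvle _ _ hf
      have q2 := EE_phi'' hd hu v hvle _ _ hf'
      omega

theorem exists_two {S : Set (List ℕ)} (h : 2 ≤ S.ncard) : ∃ x ∈ S, ∃ y ∈ S, x ≠ y := by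
  have hf : S.Finite := Set.finite_of_ncard_pos (by omega)
  exact (Set.one_lt_ncard hf).1 (by omega)

theorem ncard_inj_image (f : ℕ → List ℕ) (hf : Function.Injective f) (S : Set (List ℕ))
    (a b : ℕ) (h : S = f '' (Finset.Icc a b : Finset ℕ)) : S.ncard = b + 1 - a := by
  rw [h, Set.ncard_image_of_injective _ hf, Set.ncard_coe_finset, Nat.card_Icc]

theorem bext_card (d i : ℕ) (w : List ℕ) (hi : i < d - 1) (S : Set (List ℕ))
    (h : S = {x | ∃ a c, x = a :: (w ++ [c]) ∧ Ext d i a c}) :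
    S.ncard = 1 + 2 * (d - 1 - i) := by
  let g : ℕ × ℕ → List ℕ := fun p => p.1 :: (w ++ [p.2])
  have hg : Function.Injective g := by
    rintro ⟨a, b⟩ ⟨a', b'⟩ h
    simp only [g, List.cons.injEq, List.append_cancel_left_eq, and_true] at h
    rw [h.1, h.2]
  have e : S = g '' (((({(d - 1, d - 1)} : Finset (ℕ × ℕ)) ∪
      (Finset.Ioc i (d - 1)).image (fun k => (i, k))) ∪
      (Finset.Ioc i (d - 1)).image (fun k => (k, i)) : Finset (ℕ × ℕ)) : Set (ℕ × ℕ)) := by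
    rw [h]
    ext x
    simp only [Set.mem_setOf_eq, Set.mem_image, Finset.mem_coe, Finset.mem_union,
      Finset.mem_singleton, Finset.mem_image, Finset.mem_Ioc, g]
    constructor
    · rintro ⟨a, c, rfl, h⟩
      refine ⟨(a, c), ?_, rfl⟩
      rcases h with ⟨rfl, rfl⟩ | ⟨rfl, h⟩ | ⟨rfl, h⟩
      · exact Or.inl (Or.inl rfl)
      · exact Or.inl (Or.inr ⟨c, h, rfl⟩)
      · exact Or.inr ⟨a, h, rfl⟩
    · rintro ⟨⟨a, c⟩, h, rfl⟩
      refine ⟨a, c, rfl, ?_⟩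
      simp only [Prod.mk.injEq] at h
      unfold Ext
      rcases h with (h | ⟨k, h⟩) | ⟨k, h⟩ <;> omega
  rw [e, Set.ncard_image_of_injective _ hg, Set.ncard_coe_finset, Finset.card_union_of_disjoint,
    Finset.card_union_of_disjoint, Finset.card_image_of_injective, Finset.card_image_of_injective,
    Nat.card_Ioc, Finset.card_singleton]
  · omega
  · intro x y h; simpa using h
  · intro x y h; simpa using h
  · rw [Finset.disjoint_left]
    rintro ⟨a, c⟩ h1 h2
    simp only [Finset.mem_singleton, Finset.mem_image, Finset.mem_Ioc, Prod.mk.injEq] at h1 h2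
    obtain ⟨k, hk⟩ := h2
    omega
  · rw [Finset.disjoint_left]
    rintro ⟨a, c⟩ h1 h2
    simp only [Finset.mem_union, Finset.mem_singleton, Finset.mem_image, Finset.mem_Ioc,
      Prod.mk.injEq] at h1 h2
    obtain ⟨k, hk⟩ := h2
    rcases h1 with h1 | ⟨k', hk'⟩ <;> omega

/-- Let `d ≥ 3` and let `w` be a bispecial factor of `u_d` with at least two
distinct left-extension letters smaller than `d−1`, and let `i` be the minimal letter `a`
with `aw ∈ L(u_d)`. Then `w = F_i`, `i ≤ d−3`, the both-sided extensions of `w` are exactly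
`(d−1)w(d−1)`, `iwk` and `kwi` for `i < k ≤ d−1`, and the bilateral order of `w` is `0`. -/
theorem statement7 (d : ℕ) (hd : 3 ≤ d) (u : ℕ → ℕ) (hu : IsPhiFixed d u)
    (w : List ℕ) (hw : Bispecial u w)
    (htwo : ∃ a b : ℕ, a ≠ b ∧ a < d - 1 ∧ b < d - 1 ∧
      IsFactorS (a :: w) u ∧ IsFactorS (b :: w) u)
    (i : ℕ) (hiw : IsFactorS (i :: w) u)
    (himin : ∀ a : ℕ, IsFactorS (a :: w) u → i ≤ a) :
    w = Fword d i ∧ i ≤ d - 3 ∧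
    Bext u w = {x : List ℕ | x = (d - 1) :: (w ++ [d - 1]) ∨
      (∃ k : ℕ, i < k ∧ k ≤ d - 1 ∧ x = i :: (w ++ [k])) ∨
      (∃ k : ℕ, i < k ∧ k ≤ d - 1 ∧ x = k :: (w ++ [i]))} ∧
    bord u w = 0 := by
  obtain ⟨hwf, hL2, hR2⟩ := hw
  obtain ⟨a, b, hab, had, hbd, ha, hb⟩ := htwo
  obtain ⟨c, hc⟩ := (left_iff u w a).1 ha
  obtain ⟨c', hc'⟩ := (left_iff u w b).1 hb
  obtain ⟨x, ⟨e, rfl, he⟩, y, ⟨e', rfl, he'⟩, hxy⟩ := exists_two hR2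
  obtain ⟨f, hf⟩ := (right_iff hd hu w e).1 he
  obtain ⟨f', hf'⟩ := (right_iff hd hu w e').1 he'
  obtain ⟨i', hi', hF, hE⟩ := core hd hu _ w rfl ⟨a, b, c, c', had, hbd, hab, hc, hc'⟩
    ⟨f, f', e, e', by rintro rfl; exact hxy rfl, hf, hf'⟩
  have hii : i = i' := by
    obtain ⟨q, hq⟩ := (left_iff u w i).1 hiw
    rw [hE] at hq
    have := himin i' ((left_iff u w i').2 ⟨d - 1, by rw [hE]; unfold Ext; omega⟩)
    unfold Ext at hq
    omega
  subst hii
  have hB : Bext u w = {x | ∃ a c, x = a :: (w ++ [c]) ∧ Ext d i a c} := by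
    ext x
    constructor
    · rintro ⟨p, q, rfl, h⟩
      exact ⟨p, q, rfl, (hE p q).1 h⟩
    · rintro ⟨p, q, rfl, h⟩
      exact ⟨p, q, rfl, (hE p q).2 h⟩
  refine ⟨hF, hi', ?_, ?_⟩
  · rw [hB]
    ext x
    simp only [Set.mem_setOf_eq]
    constructor
    · rintro ⟨p, q, rfl, ⟨rfl, rfl⟩ | ⟨rfl, h⟩ | ⟨rfl, h⟩⟩
      · exact Or.inl rfl
      · exact Or.inr (Or.inl ⟨q, h.1, h.2, rfl⟩)
      · exact Or.inr (Or.inr ⟨p, h.1, h.2, rfl⟩)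
    · rintro (rfl | ⟨k, h1, h2, rfl⟩ | ⟨k, h1, h2, rfl⟩)
      · exact ⟨_, _, rfl, Or.inl ⟨rfl, rfl⟩⟩
      · exact ⟨_, _, rfl, Or.inr (Or.inl ⟨rfl, h1, h2⟩)⟩
      · exact ⟨_, _, rfl, Or.inr (Or.inr ⟨rfl, h1, h2⟩)⟩
  · have cB := bext_card d i w (by omega) _ hB
    have cL : (Lext u w).ncard = d - 1 + 1 - i := by
      apply ncard_inj_image (fun k => k :: w) (fun p q h => by simpa using h)
      ext x
      simp only [Set.mem_image, Finset.mem_coe, Finset.mem_Icc]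
      constructor
      · rintro ⟨p, rfl, h⟩
        obtain ⟨q, hq⟩ := (left_iff u w p).1 h
        rw [hE] at hq
        refine ⟨p, ?_, rfl⟩
        unfold Ext at hq
        omega
      · rintro ⟨p, hp, rfl⟩
        refine ⟨p, rfl, (left_iff u w p).2 ?_⟩
        simp only [hE]
        by_cases h : p = i
        · exact ⟨d - 1, by unfold Ext; omega⟩
        · exact ⟨i, by unfold Ext; omega⟩
    have cR : (Rext u w).ncard = d - 1 + 1 - i := by
      apply ncard_inj_image (fun k => w ++ [k]) (fun p q h => by simpa using h)
      ext x
      simp only [Set.mem_image, Finset.mem_coe, Finset.mem_Icc]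
      constructor
      · rintro ⟨p, rfl, h⟩
        obtain ⟨q, hq⟩ := (right_iff hd hu w p).1 h
        rw [hE] at hq
        refine ⟨p, ?_, rfl⟩
        unfold Ext at hq
        omega
      · rintro ⟨p, hp, rfl⟩
        refine ⟨p, rfl, (right_iff hd hu w p).2 ?_⟩
        simp only [hE]
        by_cases h : p = i
        · exact ⟨d - 1, by unfold Ext; omega⟩
        · exact ⟨i, by unfold Ext; omega⟩
    unfold bord
    rw [cB, cL, cR]
    omega
end RichRT
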